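/- Let 0 ≤ β ≤ γ ≤ 1 with γ > 0 and βγ < 1. Then for all real x > 0, (βx² − γ)·ln((βx + 1)/(x + γ)) ≤ (1 − βγ)·x. -/

import Mathlib

/-!
Write `F = (βx + 1) / (x + γ)`. The elementary bound `log t ≤ t - 1`, applied to `F` and to `F⁻¹`,
gives `-(1 - β) x ≤ log F ≤ (1 - γ) / x`; the two sides are exchanged by the symmetry
`(β, γ, x) ↦ (γ, β, x⁻¹)`. The sign of `βx² - γ` decides which of them bounds the product, and the
result is at most `γ (1 - β) x` or `β (1 - γ) x`, each of which is at most `(1 - βγ) x`.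
-/

theorem log_div_le_div_of_sub_le {p q c d : ℝ} (hp : 0 < p) (hc : 0 ≤ c) (hd : 0 < d)
    (hpq : p - q ≤ c) (hdq : d ≤ q) : Real.log (p / q) ≤ c / d := by
  have hq : 0 < q := hd.trans_le hdq
  calc Real.log (p / q) ≤ p / q - 1 := Real.log_le_sub_one_of_pos (div_pos hp hq)
    _ = (p - q) / q := div_sub_one hq.ne'
    _ ≤ c / d := div_le_div₀ hc hpq hd hdq

section

variable {β γ x : ℝ}

theorem log_mul_add_one_div_add_le (hβ : 0 ≤ β) (hβ1 : β ≤ 1) (hγ : 0 ≤ γ) (hγ1 : γ ≤ 1)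
    (hx : 0 < x) : Real.log ((β * x + 1) / (x + γ)) ≤ (1 - γ) / x := by
  have hβx : β * x ≤ x := mul_le_of_le_one_left hx.le hβ1
  exact log_div_le_div_of_sub_le (by positivity) (by linarith) hx (by linarith) (by linarith)

theorem neg_le_log_mul_add_one_div_add (hβ : 0 ≤ β) (hβ1 : β ≤ 1) (hγ : 0 ≤ γ) (hγ1 : γ ≤ 1)
    (hx : 0 < x) : -((1 - β) * x) ≤ Real.log ((β * x + 1) / (x + γ)) := by
  have hβx : 0 ≤ β * x := mul_nonneg hβ hx.le
  have hβx' : 0 ≤ (1 - β) * x := mul_nonneg (sub_nonneg.2 hβ1) hx.le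
  have hinv : Real.log ((x + γ) / (β * x + 1)) ≤ (1 - β) * x / 1 :=
    log_div_le_div_of_sub_le (by positivity) hβx' one_pos (by linarith) (by linarith)
  rw [← inv_div, Real.log_inv]
  linarith

theorem cubic_log_inequality_general (hβ : 0 ≤ β) (hβ1 : β ≤ 1) (hγ : 0 ≤ γ) (hγ1 : γ ≤ 1)
    (hx : 0 < x) :
    (β * x ^ 2 - γ) * Real.log ((β * x + 1) / (x + γ)) ≤ (1 - β * γ) * x := by
  rcases le_total (β * x ^ 2) γ with hsmall | hlarge
  · calc (β * x ^ 2 - γ) * Real.log ((β * x + 1) / (x + γ))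
        ≤ (β * x ^ 2 - γ) * -((1 - β) * x) :=
          mul_le_mul_of_nonpos_left (neg_le_log_mul_add_one_div_add hβ hβ1 hγ hγ1 hx)
            (sub_nonpos.2 hsmall)
      _ = (γ - β * x ^ 2) * (1 - β) * x := by ring
      _ ≤ γ * (1 - β) * x := by
          have : 0 ≤ 1 - β := sub_nonneg.2 hβ1
          gcongr
          exact sub_le_self γ (by positivity)
      _ ≤ (1 - β * γ) * x := by gcongr; linarith
  · calc (β * x ^ 2 - γ) * Real.log ((β * x + 1) / (x + γ))
        ≤ (β * x ^ 2 - γ) * ((1 - γ) / x) :=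
          mul_le_mul_of_nonneg_left (log_mul_add_one_div_add_le hβ hβ1 hγ hγ1 hx)
            (sub_nonneg.2 hlarge)
      _ ≤ β * x ^ 2 * ((1 - γ) / x) := by
          have : 0 ≤ 1 - γ := sub_nonneg.2 hγ1
          gcongr
          exact sub_le_self _ hγ
      _ = β * (1 - γ) * x := by field_simp
      _ ≤ (1 - β * γ) * x := by gcongr; linarith

end

theorem cubic_log_inequality (β γ : ℝ) (hβ : 0 ≤ β) (hβγ : β ≤ γ) (hγ1 : γ ≤ 1)
    (hγ : 0 < γ) (hbg : β * γ < 1) :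
    ∀ x : ℝ, 0 < x →
      (β * x ^ 2 - γ) * Real.log ((β * x + 1) / (x + γ)) ≤ (1 - β * γ) * x :=
  fun _ hx => cubic_log_inequality_general hβ (hβγ.trans hγ1) hγ.le hγ1 hx
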